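/- One-step contraction of Quantile-RaSKA in the corrupted (noiseless) case (Theorem 4.4): let λ > 0, f(x) = λ‖x‖₁ + (1/2)‖x‖², let A ∈ ℝ^{m×n} be full rank with unit-norm rows a_1ᵀ, …, a_mᵀ, let b = A x̂ + b^c where b^c has exactly βm nonzero entries, A x̂ ≠ 0, and x̂ is the unique solution of min_x f(x) subject to A x = A x̂; assume β < q < 1 − β with qm, βm integers. Let x ∈ ℝ^n with x* ∈ ∂f(x) ∩ Range(Aᵀ), let Q be the q-quantile of (|⟨a_i, x⟩ − b_i|)_{i=1}^m, let T = {i : |⟨a_i, x⟩ − b_i| < Q} and assume |T| = qm. Let γ = (1/σ̃_min(A)²)·(|x̂|_min + 2λ)/|x̂|_min, and let the stepsize w > 0 satisfy 0 < (w/(γqm))·(σ_{q−β,min}²/σ_max² − √β/√(1−q−β)) − (w²σ_max²/(γq²m²))·(1 + √β/√(1−q−β))² < 1. Define x'* = x* − (w/(qm))·Σ_{i ∈ T}(⟨a_i, x⟩ − b_i)·a_i and x' = S_λ(x'*). Then D_f^{x'*}(x', x̂) ≤ [1 − (w/(γqm))·(σ_{q−β,min}²/σ_max² − √β/√(1−q−β))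 + (w²σ_max²/(γq²m²))·(1 + √β/√(1−q−β))²]·D_f^{x*}(x, x̂). -/

import Mathlib

/-- Euclidean inner product on finite-dimensional real coordinate space. -/
noncomputable def ip {I : Type*} [Fintype I] (u v : I → ℝ) : ℝ := ∑ i, u i * v i

/-- Euclidean norm. -/
noncomputable def enorm2 {I : Type*} [Fintype I] (v : I → ℝ) : ℝ :=
  Real.sqrt (∑ i, (v i) ^ 2)

/-- ℓ₁ norm. -/
noncomputable def norm1 {I : Type*} [Fintype I] (v : I → ℝ) : ℝ := ∑ i, |v i|

/-- ℓ∞ norm. -/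
noncomputable def normInf {I : Type*} [Fintype I] (v : I → ℝ) : ℝ := ⨆ i, |v i|

/-- Subdifferential of a convex function. -/
def subdiff {I : Type*} [Fintype I] (f : (I → ℝ) → ℝ) (x : I → ℝ) : Set (I → ℝ) :=
  {g | ∀ y, f y ≥ f x + ip g (y - x)}

/-- Bregman distance `D_f^{g}(x, y)` with respect to `f` and subgradient `g ∈ ∂f(x)`. -/
noncomputable def breg {I : Type*} [Fintype I] (f : (I → ℝ) → ℝ) (g x y : I → ℝ) : ℝ :=
  f y - f x - ip g (y - x)

/-- Fenchel conjugate. -/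
noncomputable def fconj {I : Type*} [Fintype I] (f : (I → ℝ) → ℝ) (u : I → ℝ) : ℝ :=
  ⨆ z, (ip u z - f z)

/-- Soft shrinkage (soft thresholding) operator. -/
noncomputable def softShrink {I : Type*} [Fintype I] (lam : ℝ) (x : I → ℝ) : I → ℝ :=
  fun i => Real.sign (x i) * max (|x i| - lam) 0

/-- Smallest singular value `σ_min(M) = inf_{x ≠ 0} ‖Mx‖/‖x‖`. -/
noncomputable def sigmaMin {I J : Type*} [Fintype I] [Fintype J] (M : Matrix I J ℝ) : ℝ :=
  sInf {r | ∃ x : J → ℝ, x ≠ 0 ∧ r = enorm2 (M.mulVec x) / enorm2 x}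

/-- Largest singular value `σ_max(M) = sup_{x ≠ 0} ‖Mx‖/‖x‖`. -/
noncomputable def sigmaMax {I J : Type*} [Fintype I] [Fintype J] (M : Matrix I J ℝ) : ℝ :=
  sSup {r | ∃ x : J → ℝ, x ≠ 0 ∧ r = enorm2 (M.mulVec x) / enorm2 x}

/-- Frobenius norm. -/
noncomputable def frobNorm {I J : Type*} [Fintype I] [Fintype J] (M : Matrix I J ℝ) : ℝ :=
  Real.sqrt (∑ i, ∑ j, (M i j) ^ 2)

/-- `‖A‖_{1,2} = sqrt (∑ i ‖a_i‖₁²)` where `a_iᵀ` are the rows of `A`. -/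
noncomputable def norm12 {m n : ℕ} (A : Matrix (Fin m) (Fin n) ℝ) : ℝ :=
  Real.sqrt (∑ i, (norm1 (A i)) ^ 2)

/-- Column submatrix `A_J`. -/
noncomputable def colSub {m n : ℕ} (A : Matrix (Fin m) (Fin n) ℝ) (J : Finset (Fin n)) :
    Matrix (Fin m) {j // j ∈ J} ℝ := A.submatrix id Subtype.val

/-- Row submatrix `A_I`. -/
noncomputable def rowSub {m n : ℕ} (A : Matrix (Fin m) (Fin n) ℝ) (I : Finset (Fin m)) :
    Matrix {i // i ∈ I} (Fin n) ℝ := A.submatrix Subtype.val id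

/-- Submatrix `A_{I,J}` with rows in `I` and columns in `J`. -/
noncomputable def subMat {m n : ℕ} (A : Matrix (Fin m) (Fin n) ℝ)
    (I : Finset (Fin m)) (J : Finset (Fin n)) :
    Matrix {i // i ∈ I} {j // j ∈ J} ℝ := A.submatrix Subtype.val Subtype.val

/-- `σ̃_min(A) = min{σ_min(A_J) : J ⊆ {1,…,n}, A_J ≠ 0}`. -/
noncomputable def sigmaTildeMin {m n : ℕ} (A : Matrix (Fin m) (Fin n) ℝ) : ℝ :=
  sInf {r | ∃ J : Finset (Fin n), colSub A J ≠ 0 ∧ r = sigmaMin (colSub A J)}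

/-- `σ̃_{q−β,min}(A)` (with `k = (q−β)m`): min of `σ_min(A_{I,J})` over `|I| = k` and
`J` nonempty. -/
noncomputable def sigmaTildeQBMin {m n : ℕ} (A : Matrix (Fin m) (Fin n) ℝ) (k : ℕ) : ℝ :=
  sInf {r | ∃ (I : Finset (Fin m)) (J : Finset (Fin n)),
    I.card = k ∧ J.Nonempty ∧ r = sigmaMin (subMat A I J)}

/-- Variant of `σ̃_{q−β,min}(A)` requiring moreover `A_J ≠ 0`. -/
noncomputable def sigmaTildeQBMin' {m n : ℕ} (A : Matrix (Fin m) (Fin n) ℝ) (k : ℕ) : ℝ :=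
  sInf {r | ∃ (I : Finset (Fin m)) (J : Finset (Fin n)),
    I.card = k ∧ J.Nonempty ∧ colSub A J ≠ 0 ∧ r = sigmaMin (subMat A I J)}

/-- `σ_{q−β,min}(A)` (with `k = (q−β)m`): min of `σ_min(A_I)` over `|I| = k`. -/
noncomputable def sigmaQBMin {m n : ℕ} (A : Matrix (Fin m) (Fin n) ℝ) (k : ℕ) : ℝ :=
  sInf {r | ∃ I : Finset (Fin m), I.card = k ∧ r = sigmaMin (rowSub A I)}

/-- The increasingly sorted rearrangement `y_(1) ≤ … ≤ y_(m)` of a finite tuple. -/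
noncomputable def sortedVal {m : ℕ} (y : Fin m → ℝ) : Fin m → ℝ := y ∘ Tuple.sort y

/-- The `q`-quantile of `y_1, …, y_m` in the case where `qm = k` is an integer:
`(y_(k) + y_(k+1))/2` (1-indexed). -/
noncomputable def quantileAt {m : ℕ} (k : ℕ) (y : Fin m → ℝ) : ℝ :=
  if h : 0 < k ∧ k < m then
    (sortedVal y ⟨k - 1, by omega⟩ + sortedVal y ⟨k, h.2⟩) / 2
  else 0

/-- `|x̂|_min = min{|x̂_j| : x̂_j ≠ 0}`. -/
noncomputable def xminOf {n : ℕ} (xhat : Fin n → ℝ) : ℝ :=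
  sInf {r | ∃ j, xhat j ≠ 0 ∧ r = |xhat j|}

/-
Write `f = g + ½‖·‖²` with `g = λ‖·‖₁`. Strong convexity of `f` and Young's inequality show that
the step `x* ↦ x* - s v` changes the Bregman distance to `x̂` by at most
`-s ⟨v, x - x̂⟩ + ½ s² ‖v‖²`, whatever the new primal point is. Here `v = ∑ i ∈ T, rᵢ aᵢ`, and
`rᵢ = (A (x - x̂))ᵢ` on the uncorrupted rows. A corrupted residual selected in `T` is no larger than
any residual outside `T`, and at least `(1 - q - β) m` of these are uncorrupted, so the selected
corrupted residuals have square sum at most `β / (1 - q - β) ‖A (x - x̂)‖²`; this bounds both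
`⟨v, x - x̂⟩` from below and `‖v‖` from above in terms of `‖A (x - x̂)‖`. Finally,
`D_f(x, x̂) ≤ γ ‖A (x - x̂)‖²`, because a subgradient of `λ‖·‖₁` at `x` can only fail to be one
at `x̂` in coordinates where `|xⱼ - x̂ⱼ| ≥ |x̂|_min`.
-/

section EuclideanNorm

variable {I : Type*} [Fintype I]

theorem enorm2_nonneg (v : I → ℝ) : 0 ≤ enorm2 v := Real.sqrt_nonneg _

theorem enorm2_sq (v : I → ℝ) : enorm2 v ^ 2 = ∑ i, v i ^ 2 :=
  Real.sq_sqrt (Finset.sum_nonneg fun _ _ => sq_nonneg _)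

theorem enorm2_zero : enorm2 (0 : I → ℝ) = 0 := by simp [enorm2]

theorem enorm2_pos {v : I → ℝ} (hv : v ≠ 0) : 0 < enorm2 v := by
  obtain ⟨i, hi⟩ := Function.ne_iff.mp hv
  exact Real.sqrt_pos.mpr <| Finset.sum_pos' (fun _ _ => sq_nonneg _)
    ⟨i, Finset.mem_univ _, sq_pos_of_ne_zero hi⟩

end EuclideanNorm

section SingularValues

open scoped Matrix

theorem ip_sum_smul_row {I J : Type*} [Fintype J] (M : Matrix I J ℝ) (T : Finset I)
    (r : I → ℝ) (e : J → ℝ) : ip (∑ i ∈ T, r i • M i) e = ∑ i ∈ T, r i * (M *ᵥ e) i := by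
  change (∑ i ∈ T, r i • M i) ⬝ᵥ e = _
  simp only [sum_dotProduct, smul_dotProduct, smul_eq_mul, Matrix.mulVec]

variable {I J : Type*} [Fintype I] [Fintype J]

theorem sigmaMin_nonneg (M : Matrix I J ℝ) : 0 ≤ sigmaMin M := by
  refine Real.sInf_nonneg ?_
  rintro _ ⟨x, _, rfl⟩
  exact div_nonneg (enorm2_nonneg _) (enorm2_nonneg _)

theorem sigmaMin_mul_enorm2_le (M : Matrix I J ℝ) (x : J → ℝ) :
    sigmaMin M * enorm2 x ≤ enorm2 (M *ᵥ x) := by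
  rcases eq_or_ne x 0 with rfl | hx
  · rw [enorm2_zero, mul_zero]
    exact enorm2_nonneg _
  · rw [← le_div_iff₀ (enorm2_pos hx)]
    refine csInf_le ⟨0, ?_⟩ ⟨x, hx, rfl⟩
    rintro _ ⟨y, _, rfl⟩
    exact div_nonneg (enorm2_nonneg _) (enorm2_nonneg _)

theorem enorm2_mulVec_le_frobNorm (M : Matrix I J ℝ) (x : J → ℝ) :
    enorm2 (M *ᵥ x) ≤ frobNorm M * enorm2 x := by
  rw [enorm2, enorm2, frobNorm, ← Real.sqrt_mul (by positivity), Finset.sum_mul]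
  exact Real.sqrt_le_sqrt <| Finset.sum_le_sum fun i _ => Finset.sum_mul_sq_le_sq_mul_sq _ _ _

theorem enorm2_mulVec_le (M : Matrix I J ℝ) (x : J → ℝ) :
    enorm2 (M *ᵥ x) ≤ sigmaMax M * enorm2 x := by
  rcases eq_or_ne x 0 with rfl | hx
  · rw [Matrix.mulVec_zero, enorm2_zero, enorm2_zero, mul_zero]
  · rw [← div_le_iff₀ (enorm2_pos hx)]
    refine le_csSup ⟨frobNorm M, ?_⟩ ⟨x, hx, rfl⟩
    rintro _ ⟨y, hy, rfl⟩
    exact (div_le_iff₀ (enorm2_pos hy)).mpr (enorm2_mulVec_le_frobNorm M y)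

theorem enorm2_mulVec_sq_le (M : Matrix I J ℝ) (x : J → ℝ) :
    enorm2 (M *ᵥ x) ^ 2 ≤ sigmaMax M ^ 2 * enorm2 x ^ 2 := by
  rw [← mul_pow]
  exact pow_le_pow_left₀ (enorm2_nonneg _) (enorm2_mulVec_le M x) 2

theorem enorm2_sum_smul_row_sq_le (M : Matrix I J ℝ) (T : Finset I) (r : I → ℝ) :
    enorm2 (∑ i ∈ T, r i • M i) ^ 2 ≤ sigmaMax M ^ 2 * ∑ i ∈ T, r i ^ 2 := by
  set v := ∑ i ∈ T, r i • M i with hv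
  rcases eq_or_ne v 0 with h0 | h0
  · rw [h0, enorm2_zero, zero_pow two_ne_zero]
    positivity
  have hpos : 0 < enorm2 v ^ 2 := pow_pos (enorm2_pos h0) 2
  have hself : enorm2 v ^ 2 = ∑ i ∈ T, r i * (M *ᵥ v) i := by
    rw [← ip_sum_smul_row, ← hv, enorm2_sq]
    exact Finset.sum_congr rfl fun _ _ => sq _
  have hMv : ∑ i ∈ T, (M *ᵥ v) i ^ 2 ≤ sigmaMax M ^ 2 * enorm2 v ^ 2 := calc
    _ ≤ enorm2 (M *ᵥ v) ^ 2 := by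
      rw [enorm2_sq]
      exact Finset.sum_le_univ_sum_of_nonneg fun _ => sq_nonneg _
    _ ≤ _ := enorm2_mulVec_sq_le M v
  refine le_of_mul_le_mul_right ?_ hpos
  calc enorm2 v ^ 2 * enorm2 v ^ 2
      = (∑ i ∈ T, r i * (M *ᵥ v) i) ^ 2 := by rw [← hself, sq (enorm2 v ^ 2)]
    _ ≤ (∑ i ∈ T, r i ^ 2) * ∑ i ∈ T, (M *ᵥ v) i ^ 2 := Finset.sum_mul_sq_le_sq_mul_sq _ _ _
    _ ≤ (∑ i ∈ T, r i ^ 2) * (sigmaMax M ^ 2 * enorm2 v ^ 2) := by gcongr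
    _ = sigmaMax M ^ 2 * (∑ i ∈ T, r i ^ 2) * enorm2 v ^ 2 := by ring

variable {m n : ℕ}

theorem sigmaTildeMin_nonneg (A : Matrix (Fin m) (Fin n) ℝ) : 0 ≤ sigmaTildeMin A := by
  refine Real.sInf_nonneg ?_
  rintro _ ⟨J, _, rfl⟩
  exact sigmaMin_nonneg _

theorem sigmaTildeMin_le {A : Matrix (Fin m) (Fin n) ℝ} {J : Finset (Fin n)}
    (hJ : colSub A J ≠ 0) : sigmaTildeMin A ≤ sigmaMin (colSub A J) := by
  refine csInf_le ⟨0, ?_⟩ ⟨J, hJ, rfl⟩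
  rintro _ ⟨J', _, rfl⟩
  exact sigmaMin_nonneg _

theorem sigmaTildeMin_mul_enorm2_le {A : Matrix (Fin m) (Fin n) ℝ} (hA : A ≠ 0)
    (e : Fin n → ℝ) : sigmaTildeMin A * enorm2 e ≤ enorm2 (A *ᵥ e) := by
  have hcol : colSub A Finset.univ ≠ 0 := fun h =>
    hA <| Matrix.ext fun i j => congrFun₂ h i ⟨j, Finset.mem_univ j⟩
  have hmulVec : colSub A Finset.univ *ᵥ (fun j => e j.1) = A *ᵥ e := funext fun i =>
    Finset.sum_coe_sort Finset.univ fun j => A i j * e j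
  have hnorm : enorm2 (fun j : {j // j ∈ (Finset.univ : Finset (Fin n))} => e j.1) = enorm2 e :=
    congrArg Real.sqrt (Finset.sum_coe_sort Finset.univ fun j => e j ^ 2)
  calc sigmaTildeMin A * enorm2 e
      ≤ sigmaMin (colSub A Finset.univ) * enorm2 e :=
        mul_le_mul_of_nonneg_right (sigmaTildeMin_le hcol) (enorm2_nonneg _)
    _ ≤ enorm2 (A *ᵥ e) := by
        rw [← hmulVec, ← hnorm]
        exact sigmaMin_mul_enorm2_le _ _

theorem sigmaQBMin_nonneg (A : Matrix (Fin m) (Fin n) ℝ) (k : ℕ) : 0 ≤ sigmaQBMin A k := by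
  refine Real.sInf_nonneg ?_
  rintro _ ⟨I, _, rfl⟩
  exact sigmaMin_nonneg _

theorem sigmaQBMin_card_le (A : Matrix (Fin m) (Fin n) ℝ) (I : Finset (Fin m)) :
    sigmaQBMin A I.card ≤ sigmaMin (rowSub A I) := by
  refine csInf_le ⟨0, ?_⟩ ⟨I, rfl, rfl⟩
  rintro _ ⟨I', _, rfl⟩
  exact sigmaMin_nonneg _

theorem sigmaQBMin_sq_mul_enorm2_sq_le (A : Matrix (Fin m) (Fin n) ℝ) {k : ℕ}
    {I : Finset (Fin m)} (hI : k ≤ I.card) (e : Fin n → ℝ) :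
    sigmaQBMin A k ^ 2 * enorm2 e ^ 2 ≤ ∑ i ∈ I, (A *ᵥ e) i ^ 2 := by
  obtain ⟨I', hsub, rfl⟩ := Finset.exists_subset_card_eq hI
  have hle : sigmaQBMin A I'.card * enorm2 e ≤ enorm2 (rowSub A I' *ᵥ e) :=
    (mul_le_mul_of_nonneg_right (sigmaQBMin_card_le A I') (enorm2_nonneg _)).trans
      (sigmaMin_mul_enorm2_le _ _)
  calc sigmaQBMin A I'.card ^ 2 * enorm2 e ^ 2
      = (sigmaQBMin A I'.card * enorm2 e) ^ 2 := (mul_pow _ _ _).symm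
    _ ≤ enorm2 (rowSub A I' *ᵥ e) ^ 2 :=
        pow_le_pow_left₀ (mul_nonneg (sigmaQBMin_nonneg _ _) (enorm2_nonneg _)) hle 2
    _ = ∑ i ∈ I', (A *ᵥ e) i ^ 2 := by
        rw [enorm2_sq]
        exact Finset.sum_coe_sort I' fun i => (A *ᵥ e) i ^ 2
    _ ≤ ∑ i ∈ I, (A *ᵥ e) i ^ 2 :=
        Finset.sum_le_sum_of_subset_of_nonneg hsub fun _ _ _ => sq_nonneg _

theorem sigmaQBMin_sq_div_sigmaMax_sq_mul_le (A : Matrix (Fin m) (Fin n) ℝ) {k : ℕ}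
    {I : Finset (Fin m)} (hI : k ≤ I.card) (e : Fin n → ℝ) :
    sigmaQBMin A k ^ 2 / sigmaMax A ^ 2 * enorm2 (A *ᵥ e) ^ 2 ≤ ∑ i ∈ I, (A *ᵥ e) i ^ 2 := by
  refine le_trans ?_ (sigmaQBMin_sq_mul_enorm2_sq_le A hI e)
  rw [div_mul_eq_mul_div]
  refine div_le_of_le_mul₀ (sq_nonneg _) (by positivity) ?_
  calc sigmaQBMin A k ^ 2 * enorm2 (A *ᵥ e) ^ 2
      ≤ sigmaQBMin A k ^ 2 * (sigmaMax A ^ 2 * enorm2 e ^ 2) := by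
        gcongr
        exact enorm2_mulVec_sq_le A e
    _ = sigmaQBMin A k ^ 2 * enorm2 e ^ 2 * sigmaMax A ^ 2 := by ring

end SingularValues

section Bregman

variable {I : Type*} [Fintype I] {f g : (I → ℝ) → ℝ} {u x xs : I → ℝ}

theorem mem_subdiff_iff_breg_nonneg : u ∈ subdiff f x ↔ ∀ y, 0 ≤ breg f u x y :=
  forall_congr' fun y => by rw [breg, ge_iff_le, sub_sub, sub_nonneg]

theorem breg_three_point (f : (I → ℝ) → ℝ) (xs xs' x x' y : I → ℝ) :
    breg f xs' x' y = breg f xs x y - breg f xs x x' + ip (xs' - xs) (x' - y) := by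
  have hip : ip xs' (y - x') = ip xs (y - x) - ip xs (x' - x) - ip (xs' - xs) (x' - y) := by
    simp only [ip, ← Finset.sum_sub_distrib, Pi.sub_apply]
    exact Finset.sum_congr rfl fun i _ => by ring
  rw [breg, breg, breg, hip]
  ring

theorem breg_add_smul_sub_le (hg : ConvexOn ℝ Set.univ g) (u x y : I → ℝ) {t : ℝ} (ht0 : 0 ≤ t)
    (ht1 : t ≤ 1) : breg g u x (x + t • (y - x)) ≤ t * breg g u x y := by
  have hconv : g (x + t • (y - x)) ≤ (1 - t) * g x + t * g y := by
    have h := hg.2 (Set.mem_univ x) (Set.mem_univ y) (sub_nonneg.mpr ht1) ht0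
      (sub_add_cancel 1 t)
    rwa [show (1 - t) • x + t • y = x + t • (y - x) by module] at h
  have hip : ip u (x + t • (y - x) - x) = t * ip u (y - x) := by
    rw [add_sub_cancel_left]
    exact dotProduct_smul t u (y - x)
  rw [breg, breg, hip]
  linarith

/-- The function `g + ½‖·‖²`; it is `1`-strongly convex when `g` is convex, and for `g = λ‖·‖₁`
it is the objective of the sparse Kaczmarz method. -/
noncomputable def addHalfSq (g : (I → ℝ) → ℝ) (x : I → ℝ) : ℝ := g x + 1 / 2 * enorm2 x ^ 2

theorem breg_addHalfSq (g : (I → ℝ) → ℝ) (xs x y : I → ℝ) :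
    breg (addHalfSq g) xs x y = breg g (xs - x) x y + 1 / 2 * enorm2 (y - x) ^ 2 := by
  have hip : ip xs (y - x) = ip (xs - x) (y - x)
      + 1 / 2 * (enorm2 y ^ 2 - enorm2 x ^ 2 - enorm2 (y - x) ^ 2) := by
    simp only [ip, enorm2_sq, ← Finset.sum_sub_distrib, Finset.mul_sum, ← Finset.sum_add_distrib,
      Pi.sub_apply]
    exact Finset.sum_congr rfl fun i _ => by ring
  rw [breg, breg, addHalfSq, addHalfSq, hip]
  ring

/- Along the segment from `x` to `y` the quadratic part of `breg (addHalfSq g)` is `O(t²)` while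
`breg g` is at most `t * breg g (xs - x) x y`, so dividing by `t` and letting `t → 0` isolates
the convex part. -/
theorem sub_mem_subdiff_of_mem_subdiff_addHalfSq (hg : ConvexOn ℝ Set.univ g)
    (hxs : xs ∈ subdiff (addHalfSq g) x) : xs - x ∈ subdiff g x := by
  rw [mem_subdiff_iff_breg_nonneg] at hxs ⊢
  intro y
  have hnonneg : ∀ t ∈ Set.Ioc (0 : ℝ) 1,
      0 ≤ breg g (xs - x) x y + t * (1 / 2 * enorm2 (y - x) ^ 2) := by
    rintro t ⟨ht0, ht1⟩
    have hsq : enorm2 (x + t • (y - x) - x) ^ 2 = t ^ 2 * enorm2 (y - x) ^ 2 := by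
      simp only [add_sub_cancel_left, enorm2_sq, Pi.smul_apply, smul_eq_mul, mul_pow,
        Finset.mul_sum]
    have h := hxs (x + t • (y - x))
    rw [breg_addHalfSq, hsq] at h
    refine nonneg_of_mul_nonneg_right (?_ : 0 ≤ t * _) ht0
    linarith [breg_add_smul_sub_le hg (xs - x) x y ht0.le ht1]
  have hlim : Filter.Tendsto (fun t => breg g (xs - x) x y + t * (1 / 2 * enorm2 (y - x) ^ 2))
      (nhdsWithin 0 (Set.Ioi 0)) (nhds (breg g (xs - x) x y)) := by
    refine Filter.Tendsto.mono_left (Continuous.tendsto' (by fun_prop) _ _ ?_) nhdsWithin_le_nhds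
    rw [zero_mul, add_zero]
  exact ge_of_tendsto hlim (Filter.eventually_of_mem (Ioc_mem_nhdsGT one_pos) hnonneg)

theorem breg_addHalfSq_sub_smul_le (hg : ConvexOn ℝ Set.univ g)
    (hxs : xs ∈ subdiff (addHalfSq g) x) (s : ℝ) (v x' y : I → ℝ) :
    breg (addHalfSq g) (xs - s • v) x' y ≤
      breg (addHalfSq g) xs x y - s * ip v (x - y) + 1 / 2 * (s ^ 2 * enorm2 v ^ 2) := by
  have hstrong : 1 / 2 * enorm2 (x' - x) ^ 2 ≤ breg (addHalfSq g) xs x x' := by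
    rw [breg_addHalfSq]
    exact le_add_of_nonneg_left <| mem_subdiff_iff_breg_nonneg.mp
      (sub_mem_subdiff_of_mem_subdiff_addHalfSq hg hxs) x'
  have hyoung : ip (xs - s • v - xs) (x' - y) ≤
      -(s * ip v (x - y)) + 1 / 2 * (s ^ 2 * enorm2 v ^ 2) + 1 / 2 * enorm2 (x' - x) ^ 2 := by
    simp only [ip, enorm2_sq, Finset.mul_sum, ← Finset.sum_neg_distrib, ← Finset.sum_add_distrib,
      Pi.sub_apply, Pi.smul_apply, smul_eq_mul]
    exact Finset.sum_le_sum fun i _ => by linarith [sq_nonneg (s * v i + (x' i - x i))]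
  rw [breg_three_point _ xs _ x]
  linarith

end Bregman

section SparseErrorBound

variable {I : Type*} [Fintype I] {lam μ : ℝ} {u x xs y : I → ℝ}

theorem convexOn_mul_norm1 (hlam : 0 ≤ lam) :
    ConvexOn ℝ Set.univ fun x : I → ℝ => lam * norm1 x := by
  refine ⟨convex_univ, fun x _ y _ a b ha hb _ => ?_⟩
  simp only [norm1, smul_eq_mul, Finset.mul_sum, ← Finset.sum_add_distrib]
  refine Finset.sum_le_sum fun i _ => ?_
  calc lam * |a * x i + b * y i|
      ≤ lam * (|a * x i| + |b * y i|) := by gcongr; exact abs_add_le _ _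
    _ = a * (lam * |x i|) + b * (lam * |y i|) := by
        rw [abs_mul, abs_mul, abs_of_nonneg ha, abs_of_nonneg hb]
        ring

theorem mul_le_of_mem_subdiff_norm1 (hu : u ∈ subdiff (fun x => lam * norm1 x) x) (j : I)
    (t : ℝ) : u j * t ≤ lam * (|x j + t| - |x j|) := by
  classical
  have h := hu (x + Pi.single j t)
  have hip : ip u (x + Pi.single j t - x) = u j * t := by
    rw [add_sub_cancel_left]
    exact dotProduct_single u t j
  have hnorm : norm1 (x + Pi.single j t) - norm1 x = |x j + t| - |x j| := by
    rw [norm1, norm1, ← Finset.sum_sub_distrib, Finset.sum_eq_single j]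
    · rw [Pi.add_apply, Pi.single_eq_same]
    · intro i _ hij
      rw [Pi.add_apply, Pi.single_eq_of_ne hij, add_zero, sub_self]
    · exact fun hj => absurd (Finset.mem_univ j) hj
  rw [hip] at h
  rw [← hnorm]
  linarith

theorem abs_le_of_mem_subdiff_norm1 (hlam : 0 ≤ lam)
    (hu : u ∈ subdiff (fun x => lam * norm1 x) x) (j : I) : |u j| ≤ lam := by
  have hdir : ∀ t : ℝ, |t| = 1 → u j * t ≤ lam := fun t ht =>
    calc u j * t ≤ lam * (|x j + t| - |x j|) := mul_le_of_mem_subdiff_norm1 hu j t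
      _ ≤ lam * 1 := by gcongr; linarith [abs_add_le (x j) t]
      _ = lam := mul_one lam
  rw [abs_le]
  constructor
  · linarith [hdir (-1) (by norm_num)]
  · linarith [hdir 1 abs_one]

theorem mul_eq_of_mem_subdiff_norm1 (hu : u ∈ subdiff (fun x => lam * norm1 x) x) (j : I) :
    u j * x j = lam * |x j| := by
  have hdown := mul_le_of_mem_subdiff_norm1 hu j (-x j)
  have hup := mul_le_of_mem_subdiff_norm1 hu j (x j)
  rw [add_neg_cancel, abs_zero] at hdown
  rw [← two_mul, abs_mul, abs_two] at hup
  linarith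

/- If `a` and `c` have the same sign the left-hand side vanishes; otherwise `|c| ≤ |a - c|`, and
`|c| ≤ c² / μ` since `c` is bounded away from zero. -/
theorem mul_abs_sub_mul_le {lam μ u a c : ℝ} (hμ : 0 < μ) (hu : |u| ≤ lam)
    (hua : u * a = lam * |a|) (hc : c ≠ 0 → μ ≤ |c|) :
    lam * |c| - u * c ≤ 2 * lam / μ * (a - c) ^ 2 := by
  have hlam : 0 ≤ lam := (abs_nonneg u).trans hu
  rcases lt_or_ge 0 (a * c) with hac | hac
  · have hsign : |a| * c = a * |c| := by
      rcases pos_and_pos_or_neg_and_neg_of_mul_pos hac with ⟨ha, hc⟩ | ⟨ha, hc⟩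
      · rw [abs_of_pos ha, abs_of_pos hc]
      · rw [abs_of_neg ha, abs_of_neg hc, neg_mul_comm]
    have huc : u * c = lam * |c| :=
      mul_right_cancel₀ (left_ne_zero_of_mul hac.ne') (by linear_combination c * hua + lam * hsign)
    rw [huc, sub_self]
    positivity
  · have hsq : μ * |c| ≤ (a - c) ^ 2 := calc
      μ * |c| ≤ |c| * |c| := by
        rcases eq_or_ne c 0 with rfl | hc0
        · simp only [abs_zero, mul_zero, le_refl]
        · exact mul_le_mul_of_nonneg_right (hc hc0) (abs_nonneg c)
      _ = c ^ 2 := by rw [abs_mul_abs_self, sq]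
      _ ≤ (a - c) ^ 2 := by linarith [sq_nonneg a]
    have hdual : -(u * c) ≤ lam * |c| := calc
      -(u * c) ≤ |u * c| := neg_le_abs _
      _ = |u| * |c| := abs_mul u c
      _ ≤ lam * |c| := by gcongr
    calc lam * |c| - u * c ≤ 2 * lam * |c| := by linarith
      _ = 2 * lam / μ * (μ * |c|) := by field_simp
      _ ≤ 2 * lam / μ * (a - c) ^ 2 := by gcongr

theorem breg_norm1_le (hlam : 0 ≤ lam) (hμ : 0 < μ)
    (hu : u ∈ subdiff (fun x => lam * norm1 x) x) (hy : ∀ j, y j ≠ 0 → μ ≤ |y j|) :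
    breg (fun x => lam * norm1 x) u x y ≤ 2 * lam / μ * enorm2 (x - y) ^ 2 := by
  simp only [breg, norm1, ip, enorm2_sq, Finset.mul_sum, ← Finset.sum_sub_distrib, Pi.sub_apply]
  refine Finset.sum_le_sum fun j _ => ?_
  have hux := mul_eq_of_mem_subdiff_norm1 hu j
  linarith [mul_abs_sub_mul_le hμ (abs_le_of_mem_subdiff_norm1 hlam hu j) hux (hy j)]

theorem breg_addHalfSq_norm1_le (hlam : 0 ≤ lam) (hμ : 0 < μ)
    (hxs : xs ∈ subdiff (addHalfSq fun x => lam * norm1 x) x) (hy : ∀ j, y j ≠ 0 → μ ≤ |y j|) :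
    breg (addHalfSq fun x => lam * norm1 x) xs x y ≤ (μ + 2 * lam) / μ * enorm2 (x - y) ^ 2 := by
  have hle := breg_norm1_le hlam hμ
    (sub_mem_subdiff_of_mem_subdiff_addHalfSq (convexOn_mul_norm1 hlam) hxs) hy
  have hsymm : enorm2 (y - x) ^ 2 = enorm2 (x - y) ^ 2 := by
    simp only [enorm2_sq, Pi.sub_apply, sub_sq_comm]
  rw [breg_addHalfSq, hsymm, add_div, div_self hμ.ne']
  linarith [sq_nonneg (enorm2 (x - y))]

theorem xminOf_le {n : ℕ} {y : Fin n → ℝ} {j : Fin n} (hj : y j ≠ 0) : xminOf y ≤ |y j| := by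
  refine csInf_le ⟨0, ?_⟩ ⟨j, hj, rfl⟩
  rintro _ ⟨i, _, rfl⟩
  exact abs_nonneg _

theorem xminOf_pos {n : ℕ} {y : Fin n → ℝ} (hy : y ≠ 0) : 0 < xminOf y := by
  obtain ⟨j, hj⟩ := Function.ne_iff.mp hy
  have hfinite : {r | ∃ i, y i ≠ 0 ∧ r = |y i|}.Finite :=
    (Set.finite_range fun i => |y i|).subset fun _ ⟨i, _, hi⟩ => ⟨i, hi.symm⟩
  have hnonempty : {r | ∃ i, y i ≠ 0 ∧ r = |y i|}.Nonempty := ⟨|y j|, j, hj, rfl⟩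
  obtain ⟨i, hi, heq⟩ := hnonempty.csInf_mem hfinite
  exact (abs_pos.mpr hi).trans_eq heq.symm

open scoped Matrix in
theorem breg_addHalfSq_norm1_le_enorm2_mulVec {m n : ℕ} (hlam : 0 ≤ lam)
    {A : Matrix (Fin m) (Fin n) ℝ} (hA : A ≠ 0) (hσ : sigmaTildeMin A ≠ 0) {x xs y : Fin n → ℝ}
    (hy : y ≠ 0) (hxs : xs ∈ subdiff (addHalfSq fun x => lam * norm1 x) x) :
    breg (addHalfSq fun x => lam * norm1 x) xs x y ≤
      1 / sigmaTildeMin A ^ 2 * ((xminOf y + 2 * lam) / xminOf y) *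
        enorm2 (A *ᵥ (x - y)) ^ 2 := by
  have hmin := xminOf_pos hy
  have herr : enorm2 (x - y) ^ 2 ≤ 1 / sigmaTildeMin A ^ 2 * enorm2 (A *ᵥ (x - y)) ^ 2 := by
    have hpos : 0 < sigmaTildeMin A := (sigmaTildeMin_nonneg A).lt_of_ne' hσ
    rw [one_div, ← div_eq_inv_mul, le_div_iff₀' (by positivity), ← mul_pow]
    exact pow_le_pow_left₀ (mul_nonneg (sigmaTildeMin_nonneg A) (enorm2_nonneg _))
      (sigmaTildeMin_mul_enorm2_le hA (x - y)) 2
  calc breg (addHalfSq fun x => lam * norm1 x) xs x y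
      ≤ (xminOf y + 2 * lam) / xminOf y * enorm2 (x - y) ^ 2 :=
        breg_addHalfSq_norm1_le hlam hmin hxs fun _ => xminOf_le
    _ ≤ (xminOf y + 2 * lam) / xminOf y *
          (1 / sigmaTildeMin A ^ 2 * enorm2 (A *ᵥ (x - y)) ^ 2) := by gcongr
    _ = _ := by ring

end SparseErrorBound

section CorruptedResiduals

variable {ι : Type*}

theorem sum_le_mul_sum_of_card_le {s t : Finset ι} {f : ι → ℝ} {c : ℝ} (hc : 0 ≤ c)
    (hf : ∀ i, 0 ≤ f i) (hst : ∀ i ∈ s, ∀ j ∈ t, f i ≤ f j)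
    (hcard : (s.card : ℝ) ≤ c * t.card) : ∑ i ∈ s, f i ≤ c * ∑ j ∈ t, f j := by
  rcases t.eq_empty_or_nonempty with rfl | ht
  · rw [Finset.card_empty, Nat.cast_zero, mul_zero, Nat.cast_nonpos, Finset.card_eq_zero] at hcard
    rw [hcard, Finset.sum_empty, mul_zero]
  · obtain ⟨j₀, hj₀, hmin⟩ := Finset.exists_min_image t f ht
    calc ∑ i ∈ s, f i ≤ s.card * f j₀ := by
          rw [← nsmul_eq_mul]
          exact Finset.sum_le_card_nsmul _ _ _ fun i hi => hst i hi j₀ hj₀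
      _ ≤ c * t.card * f j₀ := mul_le_mul_of_nonneg_right hcard (hf j₀)
      _ ≤ c * ∑ j ∈ t, f j := by
          rw [mul_assoc, ← nsmul_eq_mul]
          exact mul_le_mul_of_nonneg_left (Finset.card_nsmul_le_sum _ _ _ hmin) hc

theorem le_of_mem_filter_lt [Fintype ι] {f : ι → ℝ} {Q : ℝ} :
    ∀ i ∈ Finset.univ.filter (f · < Q), ∀ j ∉ Finset.univ.filter (f · < Q), f i ≤ f j := by
  intro i hi j hj
  rw [Finset.mem_filter_univ] at hi hj
  exact hi.le.trans (not_lt.mp hj)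

theorem le_card_sdiff_of_le_mul [DecidableEq ι] {S T : Finset ι} {q β M : ℝ} {k : ℕ}
    (hk : (k : ℝ) ≤ (q - β) * M) (hT : q * M ≤ T.card) (hS : (S.card : ℝ) ≤ β * M) :
    k ≤ (T \ S).card := by
  have hsdiff : (T.card : ℝ) ≤ S.card + (T \ S).card := by
    exact_mod_cast tsub_le_iff_left.mp (Finset.le_card_sdiff S T)
  have : (k : ℝ) ≤ (T \ S).card := by linarith
  exact_mod_cast this

variable [Fintype ι] [DecidableEq ι] {S T : Finset ι} {g r : ι → ℝ} {ρ : ℝ}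

/- Every residual in `T ∩ S` is dominated by all residuals outside `T ∪ S`, where `r = g`. -/
theorem sum_inter_sq_le (hr : ∀ i ∉ S, r i = g i) (hT : ∀ i ∈ T, ∀ j ∉ T, |r i| ≤ |r j|)
    (hcard : (S.card : ℝ) ≤ ρ ^ 2 * (T ∪ S)ᶜ.card) :
    ∑ i ∈ T ∩ S, r i ^ 2 ≤ ρ ^ 2 * ∑ i, g i ^ 2 := by
  have hdom : ∀ i ∈ T ∩ S, ∀ j ∈ (T ∪ S)ᶜ, r i ^ 2 ≤ r j ^ 2 := fun i hi j hj =>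
    sq_le_sq.mpr <| hT i (Finset.mem_inter.mp hi).1 j fun h =>
      Finset.mem_compl.mp hj (Finset.mem_union_left S h)
  have hsub : ((T ∩ S).card : ℝ) ≤ S.card := by
    exact_mod_cast Finset.card_le_card Finset.inter_subset_right
  calc ∑ i ∈ T ∩ S, r i ^ 2
      ≤ ρ ^ 2 * ∑ j ∈ (T ∪ S)ᶜ, r j ^ 2 :=
        sum_le_mul_sum_of_card_le (sq_nonneg ρ) (fun _ => sq_nonneg _) hdom (hsub.trans hcard)
    _ = ρ ^ 2 * ∑ j ∈ (T ∪ S)ᶜ, g j ^ 2 := by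
        refine congrArg _ (Finset.sum_congr rfl fun j hj => ?_)
        rw [hr j fun h => Finset.mem_compl.mp hj (Finset.mem_union_right T h)]
    _ ≤ ρ ^ 2 * ∑ i, g i ^ 2 := by
        gcongr
        exact Finset.subset_univ _

theorem sum_sq_le_of_corrupted (hr : ∀ i ∉ S, r i = g i)
    (hT : ∀ i ∈ T, ∀ j ∉ T, |r i| ≤ |r j|) (hcard : (S.card : ℝ) ≤ ρ ^ 2 * (T ∪ S)ᶜ.card) :
    ∑ i ∈ T, r i ^ 2 ≤ (1 + ρ ^ 2) * ∑ i, g i ^ 2 := by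
  have hgood : ∑ i ∈ T \ S, r i ^ 2 ≤ ∑ i, g i ^ 2 := calc
    _ = ∑ i ∈ T \ S, g i ^ 2 :=
      Finset.sum_congr rfl fun i hi => by rw [hr i (Finset.mem_sdiff.mp hi).2]
    _ ≤ _ := Finset.sum_le_univ_sum_of_nonneg fun _ => sq_nonneg _
  rw [← Finset.sum_inter_add_sum_sdiff T S]
  linarith [sum_inter_sq_le hr hT hcard]

theorem sum_sdiff_sq_sub_le_sum_mul (hρ : 0 ≤ ρ) (hr : ∀ i ∉ S, r i = g i)
    (hT : ∀ i ∈ T, ∀ j ∉ T, |r i| ≤ |r j|) (hcard : (S.card : ℝ) ≤ ρ ^ 2 * (T ∪ S)ᶜ.card) :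
    ∑ i ∈ T \ S, g i ^ 2 - ρ * ∑ i, g i ^ 2 ≤ ∑ i ∈ T, r i * g i := by
  have hN : 0 ≤ ∑ i, g i ^ 2 := Finset.sum_nonneg fun _ _ => sq_nonneg _
  have hgood : ∑ i ∈ T \ S, r i * g i = ∑ i ∈ T \ S, g i ^ 2 :=
    Finset.sum_congr rfl fun i hi => by rw [hr i (Finset.mem_sdiff.mp hi).2, sq]
  have hbad : (∑ i ∈ T ∩ S, r i * g i) ^ 2 ≤ (ρ * ∑ i, g i ^ 2) ^ 2 := calc
    _ ≤ (∑ i ∈ T ∩ S, r i ^ 2) * ∑ i ∈ T ∩ S, g i ^ 2 := Finset.sum_mul_sq_le_sq_mul_sq _ _ _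
    _ ≤ (ρ ^ 2 * ∑ i, g i ^ 2) * ∑ i, g i ^ 2 := by
      gcongr
      · exact sum_inter_sq_le hr hT hcard
      · exact Finset.subset_univ _
    _ = _ := by ring
  rw [← Finset.sum_inter_add_sum_sdiff T S, hgood]
  linarith [(abs_le_of_sq_le_sq' hbad (mul_nonneg hρ hN)).1]

theorem card_le_sq_mul_card_compl_union {q β : ℝ} (hβ : 0 ≤ β) (hq : q < 1 - β)
    (hT : (T.card : ℝ) ≤ q * Fintype.card ι) (hS : (S.card : ℝ) ≤ β * Fintype.card ι) :
    (S.card : ℝ) ≤ (√β / √(1 - q - β)) ^ 2 * (T ∪ S)ᶜ.card := by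
  have hpos : 0 < 1 - q - β := by linarith
  have hcompl : (1 - q - β) * Fintype.card ι ≤ ((T ∪ S)ᶜ.card : ℝ) := by
    have hunion : ((T ∪ S).card : ℝ) ≤ T.card + S.card := by
      exact_mod_cast Finset.card_union_le T S
    rw [Finset.card_compl, Nat.cast_sub (Finset.card_le_univ _)]
    linarith
  rw [div_pow, Real.sq_sqrt hβ, Real.sq_sqrt hpos.le]
  calc (S.card : ℝ) ≤ β * Fintype.card ι := hS
    _ = β / (1 - q - β) * ((1 - q - β) * Fintype.card ι) := by field_simp
    _ ≤ β / (1 - q - β) * (T ∪ S)ᶜ.card := by gcongr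

end CorruptedResiduals

section QuantileStep

open scoped Matrix

variable {m n : ℕ}

theorem breg_quantile_step_le {g : (Fin n → ℝ) → ℝ} (hg : ConvexOn ℝ Set.univ g)
    {x xs : Fin n → ℝ} (hxs : xs ∈ subdiff (addHalfSq g) x) (A : Matrix (Fin m) (Fin n) ℝ)
    {y : Fin n → ℝ} {S T : Finset (Fin m)} {r : Fin m → ℝ} {ρ s : ℝ} {k : ℕ} (hρ : 0 ≤ ρ)
    (hs : 0 ≤ s) (hr : ∀ i ∉ S, r i = (A *ᵥ (x - y)) i) (hT : ∀ i ∈ T, ∀ j ∉ T, |r i| ≤ |r j|)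
    (hcard : (S.card : ℝ) ≤ ρ ^ 2 * (T ∪ S)ᶜ.card) (hk : k ≤ (T \ S).card) (x' : Fin n → ℝ) :
    breg (addHalfSq g) (xs - s • ∑ i ∈ T, r i • A i) x' y ≤ breg (addHalfSq g) xs x y -
      (s * (sigmaQBMin A k ^ 2 / sigmaMax A ^ 2 - ρ) -
        1 / 2 * (s ^ 2 * sigmaMax A ^ 2 * (1 + ρ ^ 2))) * enorm2 (A *ᵥ (x - y)) ^ 2 := by
  set N := enorm2 (A *ᵥ (x - y)) ^ 2 with hN
  have hlin : (sigmaQBMin A k ^ 2 / sigmaMax A ^ 2 - ρ) * N ≤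
      ip (∑ i ∈ T, r i • A i) (x - y) := by
    have hgood := sigmaQBMin_sq_div_sigmaMax_sq_mul_le A hk (x - y)
    have hbad := sum_sdiff_sq_sub_le_sum_mul hρ hr hT hcard
    rw [← enorm2_sq] at hbad
    rw [ip_sum_smul_row]
    linarith
  have hquad : enorm2 (∑ i ∈ T, r i • A i) ^ 2 ≤ sigmaMax A ^ 2 * ((1 + ρ ^ 2) * N) := by
    refine (enorm2_sum_smul_row_sq_le A T r).trans ?_
    rw [hN, enorm2_sq]
    gcongr
    exact sum_sq_le_of_corrupted hr hT hcard
  calc breg (addHalfSq g) (xs - s • ∑ i ∈ T, r i • A i) x' y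
      ≤ breg (addHalfSq g) xs x y - s * ip (∑ i ∈ T, r i • A i) (x - y) +
          1 / 2 * (s ^ 2 * enorm2 (∑ i ∈ T, r i • A i) ^ 2) :=
        breg_addHalfSq_sub_smul_le hg hxs s _ x' y
    _ ≤ breg (addHalfSq g) xs x y - s * ((sigmaQBMin A k ^ 2 / sigmaMax A ^ 2 - ρ) * N) +
          1 / 2 * (s ^ 2 * (sigmaMax A ^ 2 * ((1 + ρ ^ 2) * N))) := by gcongr
    _ = _ := by ring

theorem breg_quantile_step_le_of_fraction {g : (Fin n → ℝ) → ℝ} (hg : ConvexOn ℝ Set.univ g)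
    {x xs : Fin n → ℝ} (hxs : xs ∈ subdiff (addHalfSq g) x) (A : Matrix (Fin m) (Fin n) ℝ)
    {y : Fin n → ℝ} {S T : Finset (Fin m)} {r : Fin m → ℝ} {q β s : ℝ} {k : ℕ} (hβ : 0 ≤ β)
    (hq : q < 1 - β) (hs : 0 ≤ s) (hr : ∀ i ∉ S, r i = (A *ᵥ (x - y)) i)
    (hT : ∀ i ∈ T, ∀ j ∉ T, |r i| ≤ |r j|) (hTcard : (T.card : ℝ) = q * m)
    (hS : (S.card : ℝ) ≤ β * m) (hk : (k : ℝ) ≤ (q - β) * m) (x' : Fin n → ℝ) :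
    breg (addHalfSq g) (xs - s • ∑ i ∈ T, r i • A i) x' y ≤ breg (addHalfSq g) xs x y -
      (s * (sigmaQBMin A k ^ 2 / sigmaMax A ^ 2 - √β / √(1 - q - β)) -
        s ^ 2 * sigmaMax A ^ 2 * (1 + √β / √(1 - q - β)) ^ 2) * enorm2 (A *ᵥ (x - y)) ^ 2 := by
  set ρ := √β / √(1 - q - β)
  have hρ : 0 ≤ ρ := by positivity
  have hcard : (S.card : ℝ) ≤ ρ ^ 2 * (T ∪ S)ᶜ.card :=
    card_le_sq_mul_card_compl_union hβ hq (by rw [hTcard, Fintype.card_fin])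
      (by rwa [Fintype.card_fin])
  have hconst : 1 / 2 * (s ^ 2 * sigmaMax A ^ 2 * (1 + ρ ^ 2)) ≤
      s ^ 2 * sigmaMax A ^ 2 * (1 + ρ) ^ 2 := by
    rw [mul_left_comm]
    gcongr
    nlinarith
  refine (breg_quantile_step_le hg hxs A hρ hs hr hT hcard
    (le_card_sdiff_of_le_mul hk hTcard.ge hS) x').trans ?_
  gcongr

theorem le_one_sub_div_mul {D D' N K γ : ℝ} (hγ : 0 < γ) (hK : 0 ≤ K) (hstep : D' ≤ D - K * N)
    (herr : D ≤ γ * N) : D' ≤ (1 - K / γ) * D := by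
  have hrate : K / γ * D ≤ K * N := calc
    K / γ * D ≤ K / γ * (γ * N) := by gcongr
    _ = K * N := by field_simp
  linarith

theorem stmt16_general {lam : ℝ} (hlam : 0 ≤ lam) {f : (Fin n → ℝ) → ℝ}
    (hf : f = addHalfSq fun x => lam * norm1 x) (A : Matrix (Fin m) (Fin n) ℝ) (hA : A ≠ 0)
    {q β : ℝ} (hβq : β < q) (hq : q < 1 - β) {k : ℕ} (hk : (k : ℝ) ≤ (q - β) * m)
    {xhat : Fin n → ℝ} (hxhat : xhat ≠ 0) {bc b : Fin m → ℝ}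
    (hbc : ((Finset.univ.filter fun i => bc i ≠ 0).card : ℝ) ≤ β * m) (hb : b = A *ᵥ xhat + bc)
    {γ : ℝ} (hγ : γ = 1 / sigmaTildeMin A ^ 2 * ((xminOf xhat + 2 * lam) / xminOf xhat))
    {x xs : Fin n → ℝ} (hxs : xs ∈ subdiff f x) {T : Finset (Fin m)}
    (hT : ∀ i ∈ T, ∀ j ∉ T, |ip (A i) x - b i| ≤ |ip (A j) x - b j|)
    (hTcard : (T.card : ℝ) = q * m) {w : ℝ} (hw : 0 < w)
    (hrate : 0 <
      w / (γ * q * m) * (sigmaQBMin A k ^ 2 / sigmaMax A ^ 2 - √β / √(1 - q - β)) -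
        w ^ 2 * sigmaMax A ^ 2 / (γ * q ^ 2 * m ^ 2) * (1 + √β / √(1 - q - β)) ^ 2)
    {xs' : Fin n → ℝ} (hxs' : xs' = xs - (w / (q * m)) • ∑ i ∈ T, (ip (A i) x - b i) • A i)
    (x' : Fin n → ℝ) :
    breg f xs' x' xhat ≤
      (1 - w / (γ * q * m) * (sigmaQBMin A k ^ 2 / sigmaMax A ^ 2 - √β / √(1 - q - β)) +
          w ^ 2 * sigmaMax A ^ 2 / (γ * q ^ 2 * m ^ 2) * (1 + √β / √(1 - q - β)) ^ 2) *
        breg f xs x xhat := by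
  subst hf hxs'
  set ρ := √β / √(1 - q - β)
  set s := w / (q * m) with hs
  set K := s * (sigmaQBMin A k ^ 2 / sigmaMax A ^ 2 - ρ) - s ^ 2 * sigmaMax A ^ 2 * (1 + ρ) ^ 2
    with hK
  have hKγ : w / (γ * q * m) * (sigmaQBMin A k ^ 2 / sigmaMax A ^ 2 - ρ) -
      w ^ 2 * sigmaMax A ^ 2 / (γ * q ^ 2 * m ^ 2) * (1 + ρ) ^ 2 = K / γ := by
    rw [hK, hs]
    ring
  rw [hKγ] at hrate
  have hm : (0 : ℝ) < m := Nat.cast_pos.mpr <| Nat.pos_of_ne_zero fun h => hA <| by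
    subst h
    exact Subsingleton.elim _ _
  have hβ : 0 ≤ β := nonneg_of_mul_nonneg_left ((Nat.cast_nonneg _).trans hbc) hm
  have hs0 : 0 ≤ s := div_nonneg hw.le (mul_nonneg (hβ.trans hβq.le) hm.le)
  have hγ0 : γ ≠ 0 := fun h => hrate.ne' (by rw [h, div_zero])
  have hσ : sigmaTildeMin A ≠ 0 := fun h => hγ0 (by rw [hγ, h]; simp)
  have hmin : 0 < xminOf xhat := xminOf_pos hxhat
  have hγpos : 0 < γ := lt_of_le_of_ne (by rw [hγ]; positivity) hγ0.symm
  have hres : ∀ i ∉ Finset.univ.filter fun i => bc i ≠ 0,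
      ip (A i) x - b i = (A *ᵥ (x - xhat)) i := by
    intro i hi
    rw [Finset.mem_filter_univ, not_not] at hi
    rw [hb, Matrix.mulVec_sub, Pi.add_apply, hi, add_zero]
    rfl
  have hstep := breg_quantile_step_le_of_fraction (convexOn_mul_norm1 hlam) hxs A hβ hq hs0 hres hT
    hTcard hbc hk x'
  have herr := breg_addHalfSq_norm1_le_enorm2_mulVec hlam hA hσ hxhat hxs
  rw [← hγ] at herr
  have hcontr := le_one_sub_div_mul hγpos ((div_pos_iff_of_pos_right hγpos).mp hrate).le hstep herr
  rwa [← hKγ, ← sub_add] at hcontr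

end QuantileStep

/-- Theorem 4.4, one-step contraction of Quantile-RaSKA in the
corrupted noiseless case. -/
theorem stmt16 {m n : ℕ} (lam : ℝ) (hlam : 0 < lam)
    (f : (Fin n → ℝ) → ℝ)
    (hf : f = fun x => lam * norm1 x + (1 / 2) * enorm2 x ^ 2)
    (A : Matrix (Fin m) (Fin n) ℝ)
    (hrank : A.rank = min m n) (hrows : ∀ i, enorm2 (A i) = 1)
    (q β : ℝ) (hβq : β < q) (hq : q < 1 - β)
    (kq kb kqb : ℕ)
    (hkq : (kq : ℝ) = q * m) (hkb : (kb : ℝ) = β * m) (hkqb : (kqb : ℝ) = (q - β) * m)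
    (xhat : Fin n → ℝ) (hAx : A.mulVec xhat ≠ 0)
    (hmin : ∀ z, A.mulVec z = A.mulVec xhat → z ≠ xhat → f xhat < f z)
    (bc : Fin m → ℝ)
    (hbc : (Finset.univ.filter (fun i => bc i ≠ 0)).card = kb)
    (b : Fin m → ℝ) (hb : b = A.mulVec xhat + bc)
    (γ : ℝ)
    (hγ : γ = (1 / (sigmaTildeMin A) ^ 2) * ((xminOf xhat + 2 * lam) / xminOf xhat))
    (x xs : Fin n → ℝ) (hxs : xs ∈ subdiff f x)
    (hrange : ∃ u : Fin m → ℝ, xs = A.transpose.mulVec u)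
    (Q : ℝ) (hQ : Q = quantileAt kq (fun i => |ip (A i) x - b i|))
    (T : Finset (Fin m)) (hT : T = Finset.univ.filter (fun i => |ip (A i) x - b i| < Q))
    (hTcard : T.card = kq)
    (w : ℝ) (hw : 0 < w)
    -- stepsize condition (4.6)
    (hcond1 : 0 <
      (w / (γ * q * m)) *
          ((sigmaQBMin A kqb) ^ 2 / (sigmaMax A) ^ 2 -
            Real.sqrt β / Real.sqrt (1 - q - β)) -
        (w ^ 2 * (sigmaMax A) ^ 2 / (γ * q ^ 2 * m ^ 2)) *
          (1 + Real.sqrt β / Real.sqrt (1 - q - β)) ^ 2)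
    (hcond2 :
      (w / (γ * q * m)) *
          ((sigmaQBMin A kqb) ^ 2 / (sigmaMax A) ^ 2 -
            Real.sqrt β / Real.sqrt (1 - q - β)) -
        (w ^ 2 * (sigmaMax A) ^ 2 / (γ * q ^ 2 * m ^ 2)) *
          (1 + Real.sqrt β / Real.sqrt (1 - q - β)) ^ 2 < 1)
    (xs' x' : Fin n → ℝ)
    (hxs' : xs' = xs - (w / (q * m)) • ∑ i ∈ T, (ip (A i) x - b i) • A i)
    (hx' : x' = softShrink lam xs') :
    breg f xs' x' xhat ≤
      (1 -
          (w / (γ * q * m)) *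
            ((sigmaQBMin A kqb) ^ 2 / (sigmaMax A) ^ 2 -
              Real.sqrt β / Real.sqrt (1 - q - β)) +
          (w ^ 2 * (sigmaMax A) ^ 2 / (γ * q ^ 2 * m ^ 2)) *
            (1 + Real.sqrt β / Real.sqrt (1 - q - β)) ^ 2) *
        breg f xs x xhat :=
  stmt16_general hlam.le hf A (fun h => hAx (by rw [h, Matrix.zero_mulVec])) hβq hq hkqb.le
    (fun h => hAx (by rw [h, Matrix.mulVec_zero])) (by rw [hbc, hkb]) hb hγ hxs
    (hT ▸ le_of_mem_filter_lt) (by rw [hTcard, hkq]) hw hcond1 hxs' x'
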